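/- arXiv:1707.04072 — 5 statements merged into one kernel-verified Lean document; each statement's English description precedes it below -/
import Mathlib

section
/- Let n ≥ 2 and let η ∈ Γ₂ ⊂ ℝⁿ with η₁ ≥ η₂ ≥ ⋯ ≥ η_n. Then η₁·σ₁(η|1) ≥ (2/n)·σ₂(η). -/
open Finset

/-- The `k`-th elementary symmetric polynomial of `η : Fin n → ℝ`. -/
noncomputable def sigmaE (n k : ℕ) (η : Fin n → ℝ) : ℝ :=
  ∑ s ∈ Finset.univ.powersetCard k, ∏ i ∈ s, η i

/-- `σ₁(η|i) = ∑_{j ≠ i} η j`. -/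
noncomputable def sigma1rest (n : ℕ) (η : Fin n → ℝ) (i : Fin n) : ℝ :=
  ∑ j ∈ Finset.univ.erase i, η j

/-- The Gårding cone `Γ₂`. -/
def Gamma2 (n : ℕ) (η : Fin n → ℝ) : Prop :=
  0 < sigmaE n 1 η ∧ 0 < sigmaE n 2 η

theorem newton_two {ι : Type*} [DecidableEq ι] (f : ι → ℝ) (s : Finset ι) :
    (∑ i ∈ s, f i) ^ 2 = ∑ i ∈ s, f i ^ 2 + 2 * ∑ t ∈ s.powersetCard 2, ∏ i ∈ t, f i := by
  induction s using Finset.induction_on with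
  | empty =>
    rw [Finset.powersetCard_eq_empty.2 (by simp)]
    simp
  | insert a s ha ih =>
    have h2 : ∑ t ∈ (insert a s).powersetCard 2, ∏ i ∈ t, f i
        = ∑ t ∈ s.powersetCard 2, ∏ i ∈ t, f i + f a * ∑ i ∈ s, f i := by
      rw [Finset.powersetCard_succ_insert ha, Finset.sum_union, Finset.sum_image]
      · congr 1
        rw [Finset.powersetCard_one, Finset.sum_map, Finset.mul_sum]
        refine Finset.sum_congr rfl fun i hi => ?_
        have : a ≠ i := fun h => ha (h ▸ hi)
        simp [Finset.prod_insert, this]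
      · intro t ht u hu h
        have ht' : a ∉ t := fun h => ha ((Finset.mem_powersetCard.1 ht).1 h)
        have hu' : a ∉ u := fun h => ha ((Finset.mem_powersetCard.1 hu).1 h)
        rw [← Finset.erase_insert ht', ← Finset.erase_insert hu']
        exact congrArg (fun x => Finset.erase x a) h
      · rw [Finset.disjoint_left]
        intro t ht hu
        obtain ⟨u, _, rfl⟩ := Finset.mem_image.1 hu
        exact ha ((Finset.mem_powersetCard.1 ht).1 (Finset.mem_insert_self a u))
    rw [h2, Finset.sum_insert ha, Finset.sum_insert ha]
    linear_combination ih

theorem stmt1 (n : ℕ) (hn : 2 ≤ n) (η : Fin n → ℝ) (hη : Gamma2 n η)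
    (hsort : ∀ i j : Fin n, i ≤ j → η j ≤ η i) :
    η ⟨0, by omega⟩ * sigma1rest n η ⟨0, by omega⟩ ≥ (2 / (n : ℝ)) * sigmaE n 2 η := by
  obtain ⟨h1, h2⟩ := hη
  have hN := newton_two η Finset.univ
  have hS : sigmaE n 1 η = ∑ i, η i := by
    simp [sigmaE, Finset.powersetCard_one]
  change _ = _ + 2 * sigmaE n 2 η at hN
  rw [hS] at h1
  set z : Fin n := ⟨0, by omega⟩ with hz
  have e1 := Finset.add_sum_erase Finset.univ η (Finset.mem_univ z)
  have e2 := Finset.add_sum_erase Finset.univ (fun i => η i ^ 2) (Finset.mem_univ z)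
  have hc : ((Finset.univ.erase z).card : ℝ) = (n : ℝ) - 1 := by
    rw [Finset.card_erase_of_mem (Finset.mem_univ z), Finset.card_univ, Fintype.card_fin,
      Nat.cast_sub (by omega)]
    simp
  have cs := sq_sum_le_card_mul_sum_sq (s := Finset.univ.erase z) (f := η)
  have hle : ∑ j ∈ Finset.univ.erase z, η j ≤ ((Finset.univ.erase z).card : ℝ) * η z := by
    rw [← nsmul_eq_mul]
    exact Finset.sum_le_card_nsmul _ _ _ fun j _ => hsort z j (Nat.zero_le _)
  have hP : 0 ≤ ∑ j ∈ Finset.univ.erase z, η j ^ 2 := Finset.sum_nonneg fun _ _ => sq_nonneg _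
  rw [hc] at cs hle
  change η z * (∑ j ∈ Finset.univ.erase z, η j) ≥ _
  rw [← e1] at hN h1
  rw [← e2] at hN
  generalize (∑ j ∈ Finset.univ.erase z, η j) = R at *
  generalize (∑ j ∈ Finset.univ.erase z, η j ^ 2) = P at *
  generalize sigmaE n 2 η = T at *
  generalize η z = a at *
  have hn' : (2 : ℝ) ≤ n := by exact_mod_cast hn
  generalize (n : ℝ) = m at *
  have ha : 0 < a := by
    by_contra h
    push Not at h
    nlinarith
  have hR : 0 < R := by
    by_contra h
    push Not at h
    nlinarith
  have key : (m - 1) * (2 * T) ≤ (m - 1) * (m * (a * R)) := by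
    have : 0 ≤ (m - 2) * (R * ((m - 1) * a - R)) :=
      mul_nonneg (by linarith) (mul_nonneg hR.le (by linarith))
    have hT : 2 * T = 2 * a * R + R ^ 2 - P := by linarith
    rw [hT]
    nlinarith
  have key2 : 2 * T ≤ m * (a * R) := le_of_mul_le_mul_left key (by linarith)
  rw [ge_iff_le, div_mul_eq_mul_div, div_le_iff₀ (by linarith)]
  linarith
end

section
/- Let n ≥ 2. There exists a constant c = c(n) > 0 such that for every η ∈ Γ₂ ⊂ ℝⁿ with η₁ ≥ η₂ ≥ ⋯ ≥ η_n and every index i with 2 ≤ i ≤ n, one has σ₁(η|i) ≥ c · ∑_{k=1}^{n} σ₁(η|k). (Equivalently, with G^{iī} = σ₁(η|i)/σ₂(η), G^{iī} ≥ c ∑_k G^{kk̄} for i ≥ 2.) -/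
open Finset

theorem sq_sum_aux {n : ℕ} (η : Fin n → ℝ) (s : Finset (Fin n)) :
    (∑ i ∈ s, η i) ^ 2 = ∑ i ∈ s, η i ^ 2 + 2 * ∑ t ∈ s.powersetCard 2, ∏ i ∈ t, η i := by
  induction s using Finset.induction_on with
  | empty =>
    rw [Finset.powersetCard_eq_empty.2 (by simp)]
    simp
  | insert a s ha ih =>
    have hd : Disjoint (s.powersetCard 2) ((s.powersetCard 1).image (insert a)) := by
      rw [Finset.disjoint_left]
      intro t ht ht'
      obtain ⟨u, hu, rfl⟩ := Finset.mem_image.1 ht'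
      exact ha ((Finset.mem_powersetCard.1 ht).1 (Finset.mem_insert_self a u))
    have hinj : Set.InjOn (insert a) ((s.powersetCard 1 : Finset (Finset (Fin n))) : Set (Finset (Fin n))) := by
      intro u hu v hv huv
      have hu' : a ∉ u := fun h => ha ((Finset.mem_powersetCard.1 hu).1 h)
      have hv' : a ∉ v := fun h => ha ((Finset.mem_powersetCard.1 hv).1 h)
      rw [← Finset.erase_insert hu', ← Finset.erase_insert hv', huv]
    have h2 : ∑ t ∈ (insert a s).powersetCard 2, ∏ i ∈ t, η i
        = ∑ t ∈ s.powersetCard 2, ∏ i ∈ t, η i + η a * ∑ i ∈ s, η i := by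
      rw [Finset.powersetCard_succ_insert ha, Finset.sum_union hd, Finset.sum_image hinj,
        Finset.powersetCard_one, Finset.sum_map, Finset.mul_sum]
      congr 1
      refine Finset.sum_congr rfl fun i hi => ?_
      have hai : a ∉ ({i} : Finset (Fin n)) := by
        intro h
        rw [Finset.mem_singleton] at h
        exact ha (h ▸ hi)
      exact (Finset.prod_insert hai).trans (by simp)
    rw [h2, Finset.sum_insert ha, Finset.sum_insert ha]
    linear_combination ih

theorem stmt2 (n : ℕ) (hn : 2 ≤ n) :
    ∃ c : ℝ, 0 < c ∧
      ∀ η : Fin n → ℝ, Gamma2 n η → (∀ i j : Fin n, i ≤ j → η j ≤ η i) →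
        ∀ i : Fin n, 1 ≤ (i : ℕ) →
          sigma1rest n η i ≥ c * ∑ k, sigma1rest n η k := by
  have hn' : (2 : ℝ) ≤ n := by exact_mod_cast hn
  refine ⟨1 / (4 * n), by positivity, ?_⟩
  rintro η ⟨h1, h2⟩ hmono i hi
  have hS : sigmaE n 1 η = ∑ j, η j := by
    simp [sigmaE, Finset.powersetCard_one]
  rw [hS] at h1
  have hsq := sq_sum_aux η Finset.univ
  unfold sigmaE at h2
  have hrest : ∀ k, sigma1rest n η k = ∑ j, η j - η k := by
    intro k
    rw [sigma1rest, ← Finset.add_sum_erase _ _ (Finset.mem_univ k)]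
    ring
  simp only [hrest, Finset.sum_sub_distrib, Finset.sum_const, Finset.card_univ, Fintype.card_fin,
    nsmul_eq_mul]
  set S := ∑ j, η j with hSdef
  let z : Fin n := ⟨0, by omega⟩
  have hzi : z ≠ i := by
    intro h
    rw [← h] at hi
    simp [z] at hi
  have hle : η i ≤ η z := hmono z i (Fin.le_def.2 (Nat.zero_le _))
  have hpair : η z ^ 2 + η i ^ 2 ≤ ∑ j, η j ^ 2 := by
    rw [← Finset.sum_pair (f := fun j => η j ^ 2) hzi]
    exact Finset.sum_le_sum_of_subset_of_nonneg (Finset.subset_univ _)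
      fun j _ _ => sq_nonneg _
  have key : η i ≤ 3 / 4 * S := by
    by_contra hc
    push Not at hc
    nlinarith
  have hc : 1 / (4 * (n : ℝ)) * (n * S - S) ≤ S / 4 := by
    rw [div_mul_eq_mul_div, div_le_iff₀ (by positivity)]
    nlinarith
  linarith
end

section
/- Let n ≥ 2 and let η ∈ ℝⁿ with σ₂(η) ≠ 0 (in particular this holds for η ∈ Γ₂). Define the n×n real symmetric matrix A(η) by A_{ij} = σ₂(η)^{−2}·σ₁(η|i)·σ₁(η|j) − (1−δ_{ij})·σ₂(η)^{−1}. Then det A(η) = (n−1)·σ₂(η)^{−n}. -/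
open Finset

lemma two_sigma_aux {ι : Type*} [DecidableEq ι] (f : ι → ℝ) (T : Finset ι) :
    (∑ i ∈ T, f i) ^ 2 = ∑ i ∈ T, f i ^ 2 + 2 * ∑ s ∈ T.powersetCard 2, ∏ i ∈ s, f i := by
  induction T using Finset.induction_on with
  | empty => simp [Finset.powersetCard_eq_empty.2 (show (∅ : Finset ι).card < 2 by simp)]
  | insert a T ha ih =>
    have h2 : ∑ s ∈ (insert a T).powersetCard 2, ∏ i ∈ s, f i
        = ∑ s ∈ T.powersetCard 2, ∏ i ∈ s, f i + f a * ∑ i ∈ T, f i := by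
      rw [show (2 : ℕ) = Nat.succ 1 from rfl, Finset.powersetCard_succ_insert ha,
        Finset.sum_union, Finset.sum_image]
      · congr 1
        rw [Finset.powersetCard_one, Finset.sum_map, Finset.mul_sum]
        refine Finset.sum_congr rfl fun i hi => ?_
        have : a ≠ i := fun h => ha (h ▸ hi)
        simp [Finset.prod_insert, this]
      · intro s hs t ht h
        have hs' : a ∉ s := fun h => ha ((Finset.mem_powersetCard.1 hs).1 h)
        have ht' : a ∉ t := fun h => ha ((Finset.mem_powersetCard.1 ht).1 h)
        rw [← Finset.erase_insert hs', ← Finset.erase_insert ht', h]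
      · rw [Finset.disjoint_left]
        intro s hs h
        obtain ⟨t, _, rfl⟩ := Finset.mem_image.1 h
        exact ha ((Finset.mem_powersetCard.1 hs).1 (Finset.mem_insert_self _ _))
    rw [h2, Finset.sum_insert ha, Finset.sum_insert ha]
    linear_combination ih

theorem stmt5 (n : ℕ) (hn : 2 ≤ n) (η : Fin n → ℝ) (hη : sigmaE n 2 η ≠ 0) :
    (Matrix.of fun i j : Fin n =>
        (sigmaE n 2 η)⁻¹ ^ 2 * (sigma1rest n η i * sigma1rest n η j) -
          (if i = j then 0 else (sigmaE n 2 η)⁻¹)).det =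
      ((n : ℝ) - 1) * (sigmaE n 2 η) ^ (-(n : ℤ)) := by
  have hs2 : (∑ i, η i) ^ 2 = ∑ i, η i ^ 2 + 2 * sigmaE n 2 η := two_sigma_aux η Finset.univ
  have hv : ∀ i, sigma1rest n η i = (∑ j, η j) - η i := fun i => by
    rw [sigma1rest, ← Finset.add_sum_erase _ η (Finset.mem_univ i)]; ring
  generalize sigmaE n 2 η = s at *
  have h1 : ∑ i, sigma1rest n η i = ((n : ℝ) - 1) * ∑ j, η j := by
    simp only [hv, Finset.sum_sub_distrib]; simp; ring
  have h2 : ∑ i, sigma1rest n η i * sigma1rest n η i = ((n : ℝ) - 1) * (∑ j, η j) ^ 2 - 2 * s := by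
    have : ∀ i, sigma1rest n η i * sigma1rest n η i
        = (∑ j, η j) ^ 2 - (2 * ∑ j, η j) * η i + η i ^ 2 := fun i => by rw [hv]; ring
    simp only [this, Finset.sum_sub_distrib, Finset.sum_add_distrib, ← Finset.mul_sum]
    simp
    linear_combination -hs2
  generalize (∑ j, η j) = S at *
  generalize sigma1rest n η = v at *
  let U : Matrix (Fin n) (Fin 2) ℝ := Matrix.of fun i => ![v i, 1]
  let V : Matrix (Fin 2) (Fin n) ℝ := Matrix.of ![fun j => s⁻¹ * v j, fun _ => -1]
  have hA : (Matrix.of fun i j : Fin n => s⁻¹ ^ 2 * (v i * v j) - (if i = j then 0 else s⁻¹))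
      = s⁻¹ • (1 + U * V) := by
    ext i j
    simp only [Matrix.of_apply, Matrix.smul_apply, Matrix.add_apply, Matrix.mul_apply,
      Fin.sum_univ_two, Matrix.one_apply, U, V, smul_eq_mul]
    split_ifs <;> simp <;> ring
  have hVU : V * U = !![s⁻¹ * (((n : ℝ) - 1) * S ^ 2 - 2 * s), s⁻¹ * (((n : ℝ) - 1) * S);
      -(((n : ℝ) - 1) * S), -(n : ℝ)] := by
    rw [← h2, ← h1]
    ext i j
    fin_cases i <;> fin_cases j <;>
      simp [Matrix.mul_apply, U, V, Finset.mul_sum, mul_assoc]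
  rw [hA, Matrix.det_smul, Matrix.det_one_add_mul_comm, hVU, Matrix.det_fin_two]
  simp [Matrix.add_apply]
  field_simp
  ring
end

section
/- Let n ≥ 2 and let η ∈ ℝⁿ be arbitrary. Define the n×n matrices M₁ and M₂ by (M₁)_{ij} = σ₁(η|i)·σ₁(η|j) and (M₂)_{ij} = (1−δ_{ij})·σ₂(η). Then det(M₁ − M₂) = (n−1)·σ₂(η)^{n}. -/
open Finset

theorem two_mul_sum_powersetCard_two {ι : Type*} [DecidableEq ι] (f : ι → ℝ) (t : Finset ι) :
    2 * ∑ s ∈ t.powersetCard 2, ∏ i ∈ s, f i = (∑ i ∈ t, f i) ^ 2 - ∑ i ∈ t, f i ^ 2 := by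
  induction t using Finset.induction_on with
  | empty => rw [Finset.powersetCard_eq_empty.2 (by simp)]; simp
  | insert a t ha ih =>
    rw [Finset.powersetCard_succ_insert ha, Finset.sum_union, Finset.sum_image,
      Finset.sum_insert ha, Finset.sum_insert ha, mul_add, ih]
    · have h : ∑ s ∈ t.powersetCard 1, ∏ i ∈ insert a s, f i = f a * ∑ i ∈ t, f i := by
        rw [Finset.powersetCard_one, Finset.sum_map, Finset.mul_sum]
        refine Finset.sum_congr rfl fun i hi => ?_
        have : a ≠ i := fun h => ha (h ▸ hi)
        simp [Finset.prod_pair this]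
      rw [h]; ring
    · intro x hx y hy hxy
      have hx' : a ∉ x := fun h => ha ((Finset.mem_powersetCard.1 hx).1 h)
      have hy' : a ∉ y := fun h => ha ((Finset.mem_powersetCard.1 hy).1 h)
      rw [← Finset.erase_insert hx', ← Finset.erase_insert hy']
      exact congrArg (fun z => Finset.erase z a) hxy
    · rw [Finset.disjoint_left]
      intro x hx hx2
      obtain ⟨y, -, rfl⟩ := Finset.mem_image.1 hx2
      exact ha ((Finset.mem_powersetCard.1 hx).1 (Finset.mem_insert_self a y))

theorem stmt6 (n : ℕ) (hn : 2 ≤ n) (η : Fin n → ℝ) :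
    ((Matrix.of fun i j : Fin n => sigma1rest n η i * sigma1rest n η j) -
        (Matrix.of fun i j : Fin n => if i = j then 0 else sigmaE n 2 η)).det =
      ((n : ℝ) - 1) * (sigmaE n 2 η) ^ n := by
  have hq2 : 2 * sigmaE n 2 η = (∑ i, η i) ^ 2 - ∑ i, η i ^ 2 :=
    two_mul_sum_powersetCard_two η Finset.univ
  have ha : ∀ i, sigma1rest n η i = (∑ j, η j) - η i := fun i => by
    unfold sigma1rest
    rw [← Finset.add_sum_erase Finset.univ η (Finset.mem_univ i)]; ring
  have hS : ∑ i, sigma1rest n η i = ((n : ℝ) - 1) * ∑ i, η i := by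
    simp only [ha, Finset.sum_sub_distrib]; simp; ring
  have hA : ∑ i, sigma1rest n η i * sigma1rest n η i
      = ((n : ℝ) - 1) * (∑ i, η i) ^ 2 - 2 * sigmaE n 2 η := by
    have : ∀ i, sigma1rest n η i * sigma1rest n η i
        = (∑ j, η j) ^ 2 - 2 * (∑ j, η j) * η i + η i ^ 2 := fun i => by rw [ha]; ring
    simp only [this, Finset.sum_add_distrib, Finset.sum_sub_distrib, ← Finset.mul_sum, hq2]
    simp; ring
  generalize sigma1rest n η = a at *
  generalize sigmaE n 2 η = q at *
  generalize (∑ i, η i) = s at *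
  by_cases hq : q = 0
  · subst hq
    have : Nontrivial (Fin n) := Fin.nontrivial_iff_two_le.2 hn
    have h : ((Matrix.of fun i j : Fin n => a i * a j) -
        (Matrix.of fun i j : Fin n => if i = j then 0 else (0:ℝ))) = Matrix.vecMulVec a a := by
      ext i j; simp [Matrix.vecMulVec_apply]
    rw [h, Matrix.det_vecMulVec]
    simp [show n ≠ 0 by omega]
  · let U : Matrix (Fin n) (Fin 2) ℝ := Matrix.of fun i => ![a i / q, -1]
    let V : Matrix (Fin 2) (Fin n) ℝ := Matrix.of ![a, fun _ => 1]
    have h : ((Matrix.of fun i j : Fin n => a i * a j) -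
        (Matrix.of fun i j : Fin n => if i = j then 0 else q)) = q • (1 + U * V) := by
      ext i j
      by_cases hij : i = j
      · subst hij
        simp [U, V, Matrix.mul_apply, Fin.sum_univ_two]; field_simp
      · simp [U, V, Matrix.mul_apply, Fin.sum_univ_two, Matrix.one_apply, hij]; field_simp; ring
    have h00 : (V * U) 0 0 = (((n : ℝ) - 1) * s ^ 2 - 2 * q) / q := by
      rw [← hA, Finset.sum_div]; simp [U, V, Matrix.mul_apply, mul_div_assoc]
    have h01 : (V * U) 0 1 = -(((n : ℝ) - 1) * s) := by
      rw [← hS]; simp [U, V, Matrix.mul_apply]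
    have h10 : (V * U) 1 0 = (((n : ℝ) - 1) * s) / q := by
      rw [← hS, Finset.sum_div]; simp [U, V, Matrix.mul_apply]
    have h11 : (V * U) 1 1 = -(n : ℝ) := by
      simp [U, V, Matrix.mul_apply]
    rw [h, Matrix.det_smul, Matrix.det_one_add_mul_comm, Matrix.det_fin_two]
    simp only [Matrix.add_apply, h00, h01, h10, h11]
    simp
    field_simp
    ring
end

section
/- Let n ≥ 2 and let η ∈ Γ₂ ⊂ ℝⁿ. Define the n×n real symmetric matrix A(η) by A_{ij} = σ₂(η)^{−2}·σ₁(η|i)·σ₁(η|j) − (1−δ_{ij})·σ₂(η)^{−1}, and let κ₁ ≥ κ₂ ≥ ⋯ ≥ κₙ be the eigenvalues of A(η) in decreasing order. Then (i) σ₂(η)^{−2}·∑_{i=1}^{n} σ₁(η|i)² − (n−1)·σ₂(η)^{−1} ≤ κ₁ ≤ σ₂(η)^{−2}·∑_{i=1}^{n} σ₁(η|i)² + σ₂(η)^{−1}, and (ii) κᵢ ≤ σ₂(η)^{−1} for every i ≥ 2. -/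
open Finset

open Finset Matrix in
/-- Spectral data of a real symmetric matrix in terms of dot products. -/
theorem spectral_aux (n : ℕ) (A : Matrix (Fin n) (Fin n) ℝ) (hA : A.IsHermitian) :
    ∃ u : Fin n → Fin n → ℝ, (∀ i, A *ᵥ u i = hA.eigenvalues i • u i) ∧
      (∀ i j, u i ⬝ᵥ u j = if i = j then 1 else 0) ∧
      ∀ x y : Fin n → ℝ, ∑ i, (u i ⬝ᵥ x) * (u i ⬝ᵥ y) = x ⬝ᵥ y := by
  refine ⟨fun i => (hA.eigenvectorBasis i).ofLp, fun i => hA.mulVec_eigenvectorBasis i, ?_, ?_⟩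
  · intro i j
    have := orthonormal_iff_ite.mp hA.eigenvectorBasis.orthonormal i j
    rw [← this, EuclideanSpace.inner_eq_star_dotProduct]
    simp [dotProduct_comm]
  · intro x y
    have := hA.eigenvectorBasis.sum_inner_mul_inner (WithLp.toLp 2 x) (WithLp.toLp 2 y)
    simp only [EuclideanSpace.inner_eq_star_dotProduct, star_trivial] at this
    rw [dotProduct_comm x y, ← this]
    refine Finset.sum_congr rfl fun i _ => ?_
    rw [dotProduct_comm y]

open Finset Matrix in
theorem quad_aux (n : ℕ) (A : Matrix (Fin n) (Fin n) ℝ) (c : ℝ) (v : Fin n → ℝ)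
    (hA : A = Matrix.of fun i j : Fin n =>
      c ^ 2 * (v i * v j) - (if i = j then 0 else c)) (x : Fin n → ℝ) :
    x ⬝ᵥ A *ᵥ x = c ^ 2 * (v ⬝ᵥ x) ^ 2 + c * (x ⬝ᵥ x) - c * (∑ i, x i) ^ 2 := by
  have h : A *ᵥ x = fun i => c ^ 2 * v i * (v ⬝ᵥ x) + c * x i - c * ∑ j, x j := by
    funext i
    have h1 : ∀ j, A i j * x j =
        c ^ 2 * v i * (v j * x j) + (if i = j then c * x j else 0) - c * x j := by
      intro j
      rw [hA]
      simp only [Matrix.of_apply]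
      split_ifs <;> ring
    simp only [mulVec, dotProduct, h1, Finset.sum_sub_distrib, Finset.sum_add_distrib,
      Finset.sum_ite_eq, Finset.mem_univ, if_true, Finset.mul_sum]
  rw [h]
  have h2 : ∀ i, x i * (c ^ 2 * v i * (v ⬝ᵥ x) + c * x i - c * ∑ j, x j) =
      c ^ 2 * (v ⬝ᵥ x) * (v i * x i) + c * (x i * x i) - (c * ∑ j, x j) * x i := by
    intro i; ring
  change ∑ i, x i * _ = _
  simp only [h2, Finset.sum_sub_distrib, Finset.sum_add_distrib, ← Finset.mul_sum]
  change c ^ 2 * (v ⬝ᵥ x) * (v ⬝ᵥ x) + c * (x ⬝ᵥ x) - _ = _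
  ring

open Matrix in
theorem stmt11 (n : ℕ) (hn : 2 ≤ n) (η : Fin n → ℝ) (hη : Gamma2 n η)
    (A : Matrix (Fin n) (Fin n) ℝ)
    (hA : A = Matrix.of fun i j : Fin n =>
        (sigmaE n 2 η)⁻¹ ^ 2 * (sigma1rest n η i * sigma1rest n η j) -
          (if i = j then 0 else (sigmaE n 2 η)⁻¹))
    (hherm : A.IsHermitian)
    (κ : Fin n → ℝ) (hdec : ∀ i j : Fin n, i ≤ j → κ j ≤ κ i)
    (e : Equiv.Perm (Fin n)) (hκ : ∀ i, κ i = hherm.eigenvalues (e i)) :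
    ((sigmaE n 2 η)⁻¹ ^ 2 * (∑ i, (sigma1rest n η i) ^ 2)
          - ((n : ℝ) - 1) * (sigmaE n 2 η)⁻¹ ≤ κ ⟨0, by omega⟩ ∧
      κ ⟨0, by omega⟩ ≤
        (sigmaE n 2 η)⁻¹ ^ 2 * (∑ i, (sigma1rest n η i) ^ 2) + (sigmaE n 2 η)⁻¹) ∧
    ∀ i : Fin n, 1 ≤ (i : ℕ) → κ i ≤ (sigmaE n 2 η)⁻¹ := by
  have hc : 0 < (sigmaE n 2 η)⁻¹ := inv_pos.mpr hη.2
  generalize (sigmaE n 2 η)⁻¹ = c at hA hc ⊢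
  generalize sigma1rest n η = v at hA ⊢
  obtain ⟨u, hu, ho, hp⟩ := spectral_aux n A hherm
  have hQ := quad_aux n A c v hA
  have hS : ∑ i, v i ^ 2 = v ⬝ᵥ v := by simp [dotProduct, sq]
  have hcs : ∀ x y : Fin n → ℝ, (x ⬝ᵥ y) ^ 2 ≤ (x ⬝ᵥ x) * (y ⬝ᵥ y) := by
    intro x y
    have := Finset.sum_mul_sq_le_sq_mul_sq Finset.univ x y
    simpa [dotProduct, sq] using this
  have hev : ∀ i, hherm.eigenvalues i = c ^ 2 * (v ⬝ᵥ u i) ^ 2 + c - c * (∑ j, u i j) ^ 2 := by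
    intro i
    have := hQ (u i)
    rw [hu, dotProduct_smul, ho] at this
    simpa using this
  have hsymm : ∀ x y : Fin n → ℝ, x ⬝ᵥ A *ᵥ y = (A *ᵥ x) ⬝ᵥ y := by
    intro x y
    have ht : Aᵀ = A := by simpa [Matrix.conjTranspose_eq_transpose_of_trivial] using hherm.eq
    rw [dotProduct_mulVec, ← mulVec_transpose, ht]
  have hmax : ∀ i, hherm.eigenvalues i ≤ κ ⟨0, by omega⟩ := by
    intro i
    have := hκ (e.symm i)
    rw [Equiv.apply_symm_apply] at this
    rw [← this]
    exact hdec _ _ (Fin.mk_le_of_le_val (Nat.zero_le _))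
  have hray : ∀ x : Fin n → ℝ, x ⬝ᵥ A *ᵥ x ≤ κ ⟨0, by omega⟩ * (x ⬝ᵥ x) := by
    intro x
    rw [← hp x (A *ᵥ x), ← hp x x, Finset.mul_sum]
    refine Finset.sum_le_sum fun i _ => ?_
    rw [hsymm, hu, smul_dotProduct, smul_eq_mul]
    nlinarith [mul_le_mul_of_nonneg_right (hmax i) (mul_self_nonneg (u i ⬝ᵥ x))]
  have hlow : ∀ x : Fin n → ℝ, c ^ 2 * (v ⬝ᵥ x) ^ 2 + (c - n * c) * (x ⬝ᵥ x) ≤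
      κ ⟨0, by omega⟩ * (x ⬝ᵥ x) := by
    intro x
    have h1 := hray x
    rw [hQ] at h1
    have h2 := hcs 1 x
    have h3 : (1 : Fin n → ℝ) ⬝ᵥ x = ∑ i, x i := by simp [dotProduct]
    have h4 : (1 : Fin n → ℝ) ⬝ᵥ 1 = n := by simp [dotProduct]
    rw [h3, h4] at h2
    nlinarith [mul_le_mul_of_nonneg_left h2 hc.le]
  have hnn : ∀ x : Fin n → ℝ, 0 ≤ x ⬝ᵥ x := fun x =>
    Finset.sum_nonneg fun i _ => mul_self_nonneg (x i)
  rw [hS]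
  refine ⟨⟨?_, ?_⟩, ?_⟩
  · rcases (hnn v).eq_or_lt with h0 | h0
    · have h1 := hlow (u (e ⟨0, by omega⟩))
      rw [ho, if_pos rfl] at h1
      rw [← h0]
      nlinarith [mul_nonneg (sq_nonneg c) (sq_nonneg (v ⬝ᵥ u (e ⟨0, by omega⟩)))]
    · have h1 := hlow v
      refine le_of_mul_le_mul_right ?_ h0
      linarith
  · rw [hκ, hev]
    have h1 := hcs v (u (e ⟨0, by omega⟩))
    rw [ho, if_pos rfl, mul_one] at h1
    nlinarith [mul_le_mul_of_nonneg_left h1 (sq_nonneg c),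
      mul_nonneg hc.le (sq_nonneg (∑ j, u (e ⟨0, by omega⟩) j))]
  · intro i hi
    have hne : e ⟨0, by omega⟩ ≠ e i := by
      intro h
      have := congrArg Fin.val (e.injective h)
      simp at this
      omega
    have hle : κ i ≤ κ ⟨0, by omega⟩ := hdec _ _ (Fin.mk_le_of_le_val (Nat.zero_le _))
    have hk0 := hκ ⟨0, by omega⟩
    have hki := hκ i
    generalize κ ⟨0, by omega⟩ = k0 at *
    generalize e ⟨0, by omega⟩ = p at *
    generalize e i = q at *
    generalize κ i = ki at *
    by_cases hq : v ⬝ᵥ u q = 0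
    · rw [hki, hev, hq]
      nlinarith [mul_nonneg hc.le (sq_nonneg (∑ j, u q j))]
    · obtain ⟨a, ha⟩ : ∃ a, a = v ⬝ᵥ u q := ⟨_, rfl⟩
      obtain ⟨b, hb⟩ : ∃ b, b = v ⬝ᵥ u p := ⟨_, rfl⟩
      have h1 := hQ (a • u p - b • u q)
      have e1 : v ⬝ᵥ (a • u p - b • u q) = 0 := by
        rw [dotProduct_sub, dotProduct_smul, dotProduct_smul, ← ha, ← hb, smul_eq_mul, smul_eq_mul]
        ring
      have e2 : (a • u p - b • u q) ⬝ᵥ (a • u p - b • u q) = a ^ 2 + b ^ 2 := by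
        simp only [dotProduct_sub, sub_dotProduct, dotProduct_smul, smul_dotProduct, ho, if_true,
          if_neg hne, if_neg hne.symm, smul_eq_mul]
        ring
      have e3 : (a • u p - b • u q) ⬝ᵥ A *ᵥ (a • u p - b • u q) = k0 * a ^ 2 + ki * b ^ 2 := by
        simp only [mulVec_sub, mulVec_smul, hu, ← hk0, ← hki, dotProduct_sub, sub_dotProduct,
          dotProduct_smul, smul_dotProduct, ho, if_true, if_neg hne, if_neg hne.symm, smul_eq_mul]
        ring
      rw [e1, e2, e3] at h1
      have hpos : 0 < a ^ 2 + b ^ 2 := by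
        rw [← ha] at hq
        positivity
      refine le_of_mul_le_mul_right ?_ hpos
      nlinarith [mul_le_mul_of_nonneg_right hle (sq_nonneg a),
        mul_nonneg hc.le (sq_nonneg (∑ j, (a • u p - b • u q) j))]
end
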